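/- arXiv:2102.10924 — 2 statements merged into one kernel-verified Lean document; each statement's English description precedes it below -/
import Mathlib

section
/- Suppose Fix(P_S ∘ T) ≠ ∅. Then for every x ∈ Fix(P_S ∘ T) and every y ∈ S, ⟨T x − T y, y − T y⟩ ≤ 0. -/
/-!
For a radius `r ≥ 0` write `C r = {κ ≤ r}`, a convex set containing `0` and increasing in `r`.

If `r z = ‖z - T z‖`, then `κ (T z) ≤ r z`: otherwise shrinking `T z` slightly towards `0` would not
increase the objective, which contradicts uniqueness of the minimizer (`polarProx_gauge_le`).
Uniqueness then forces `T z` to be the metric projection of `z` onto `C (r z)`, so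
`⟪z - T z, w - T z⟫ ≤ 0` for every `w` in `C (r z)` (`polarProx_inner_le_zero`).

Consequently it suffices that `T x ∈ C (r y)`, which follows from `r x ≤ r y`. At a fixed point `x`
of `P_S ∘ T` the difference `x - T x` is vertical, equal to `(0, 1 - l)` with `l` the last
coordinate of `T x`. Testing the projection inequality with `w = 0` gives `0 ≤ l ≤ 1`, and so
`r x = 1 - l`. If `r y < r x`, then `T y ∈ C (r x)`, and the inequality with `w = T y` says that
the last coordinate of `T y` is at most `l`; as `y` has last coordinate `1`, this gives
`r y ≥ 1 - l = r x`, a contradiction.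
-/

open scoped ENNReal RealInnerProductSpace Pointwise Topology
open Filter

noncomputable section

variable {X : Type*} [NormedAddCommGroup X] [InnerProductSpace ℝ X] [FiniteDimensional ℝ X]

/-- The point `(x, t)` of the lifted space `E = X ×₂ ℝ` (Euclidean product). -/
def pt (x : X) (t : ℝ) : WithLp 2 (X × ℝ) := (WithLp.equiv 2 (X × ℝ)).symm (x, t)

/-- First (`X`-) coordinate of a point of the lifted space. -/
def fstE (z : WithLp 2 (X × ℝ)) : X := (WithLp.equiv 2 (X × ℝ) z).1

/-- Second (`ℝ`-) coordinate of a point of the lifted space. -/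
def sndE (z : WithLp 2 (X × ℝ)) : ℝ := (WithLp.equiv 2 (X × ℝ) z).2

/-- Orthogonal projection `P_S` onto the affine subspace `S = X × {1}`. -/
def PS (z : WithLp 2 (X × ℝ)) : WithLp 2 (X × ℝ) := pt (fstE z) 1

/-- A closed gauge: a convex, lower semicontinuous, positively homogeneous
function `κ : E → [0,∞]` on the lifted space. -/
def IsClosedGauge (κ : WithLp 2 (X × ℝ) → ℝ≥0∞) : Prop :=
  LowerSemicontinuous κ ∧
  (∀ z w : WithLp 2 (X × ℝ), ∀ a b : ℝ, 0 ≤ a → 0 ≤ b → a + b = 1 →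
    κ (a • z + b • w) ≤ ENNReal.ofReal a * κ z + ENNReal.ofReal b * κ w) ∧
  (∀ t : ℝ, 0 ≤ t → ∀ z, κ (t • z) = ENNReal.ofReal t * κ z)

/-- The objective `u ↦ max {κ(u), ‖z − u‖}` defining the polar proximal map. -/
def polarObj (κ : WithLp 2 (X × ℝ) → ℝ≥0∞) (z u : WithLp 2 (X × ℝ)) : ℝ≥0∞ :=
  max (κ u) (ENNReal.ofReal ‖z - u‖)

/-- `T` is the polar proximal map of `κ`: for every `z`, `T z` is the unique
minimizer of `u ↦ max {κ(u), ‖z − u‖}`. -/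
def IsPolarProx (κ : WithLp 2 (X × ℝ) → ℝ≥0∞)
    (T : WithLp 2 (X × ℝ) → WithLp 2 (X × ℝ)) : Prop :=
  ∀ z, (∀ u, polarObj κ z (T z) ≤ polarObj κ z u) ∧
    (∀ u, (∀ v, polarObj κ z u ≤ polarObj κ z v) → u = T z)

omit [FiniteDimensional ℝ X] in
lemma closedGauge_zero {κ : WithLp 2 (X × ℝ) → ℝ≥0∞} (hκ : IsClosedGauge κ) : κ 0 = 0 := by
  simpa using hκ.2.2 0 le_rfl 0

omit [FiniteDimensional ℝ X] in
/-- At the minimizer, the maximum in the objective is attained by the distance term. -/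
lemma polarProx_gauge_le {κ : WithLp 2 (X × ℝ) → ℝ≥0∞} (hκ : IsClosedGauge κ)
    {T : WithLp 2 (X × ℝ) → WithLp 2 (X × ℝ)} (hT : IsPolarProx κ T) (z : WithLp 2 (X × ℝ)) :
    κ (T z) ≤ ENNReal.ofReal ‖z - T z‖ := by
  by_contra! hlt
  have hobj : polarObj κ z (T z) = κ (T z) := max_eq_left hlt.le
  -- comparison with `u = 0` shows that the optimal value is finite
  have hfin : κ (T z) ≠ ⊤ := by
    have h := (hT z).1 0
    rw [hobj] at h
    refine ne_top_of_le_ne_top ?_ h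
    simp [polarObj, closedGauge_zero hκ]
  obtain ⟨k, hk0, hk⟩ : ∃ k : ℝ, 0 ≤ k ∧ κ (T z) = ENNReal.ofReal k :=
    ⟨(κ (T z)).toReal, ENNReal.toReal_nonneg, (ENNReal.ofReal_toReal hfin).symm⟩
  rw [hk] at hlt
  have hr := norm_nonneg (z - T z)
  have hrk : ‖z - T z‖ < k := (ENNReal.ofReal_lt_ofReal_iff_of_nonneg hr).1 hlt
  have hn := norm_nonneg (T z)
  have hd : 0 < k + ‖T z‖ := by linarith
  -- this step length gives `ε ≤ 1` and `‖z - T z‖ + ε ‖T z‖ ≤ k`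
  obtain ⟨ε, hε⟩ : ∃ ε : ℝ, ε = (k - ‖z - T z‖) / (k + ‖T z‖) := ⟨_, rfl⟩
  have hεm : ε * (k + ‖T z‖) = k - ‖z - T z‖ := by rw [hε]; field_simp
  have hε0 : 0 < ε := by rw [hε]; exact div_pos (by linarith) hd
  have hε1 : ε ≤ 1 := by rw [hε, div_le_one hd]; linarith
  have hmin : (1 - ε) • T z = T z := by
    refine (hT z).2 _ fun v => le_trans ?_ ((hT z).1 v)
    rw [hobj, hk]
    refine max_le ?_ (ENNReal.ofReal_le_ofReal ?_)
    · rw [hκ.2.2 _ (by linarith), hk, ← ENNReal.ofReal_mul (by linarith)]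
      exact ENNReal.ofReal_le_ofReal (by nlinarith)
    · have he : z - (1 - ε) • T z = (z - T z) + ε • T z := by module
      rw [he]
      refine (norm_add_le _ _).trans ?_
      rw [norm_smul, Real.norm_of_nonneg hε0.le]
      nlinarith
  have hz : ε • T z = 0 := by
    rw [sub_smul, one_smul] at hmin
    simpa using hmin
  have hTz : T z = 0 := (smul_eq_zero.1 hz).resolve_left hε0.ne'
  rw [hTz, closedGauge_zero hκ] at hk
  have := ENNReal.ofReal_eq_zero.1 hk.symm
  linarith

omit [FiniteDimensional ℝ X] in
/-- The variational inequality of the projection: `T z` is the point nearest to `z` in the sublevel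
set of `κ` at level `‖z - T z‖`. -/
lemma polarProx_inner_le_zero {κ : WithLp 2 (X × ℝ) → ℝ≥0∞} (hκ : IsClosedGauge κ)
    {T : WithLp 2 (X × ℝ) → WithLp 2 (X × ℝ)} (hT : IsPolarProx κ T) (z w : WithLp 2 (X × ℝ))
    (hw : κ w ≤ ENNReal.ofReal ‖z - T z‖) : ⟪z - T z, w - T z⟫ ≤ 0 := by
  have hobj : polarObj κ z (T z) = ENNReal.ofReal ‖z - T z‖ :=
    max_eq_right (polarProx_gauge_le hκ hT z)
  let C : Set (WithLp 2 (X × ℝ)) := {w | κ w ≤ ENNReal.ofReal ‖z - T z‖}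
  have hC : Convex ℝ C := by
    intro u hu v hv a b ha hb hab
    refine (hκ.2.1 u v a b ha hb hab).trans ?_
    calc _ ≤ ENNReal.ofReal a * ENNReal.ofReal ‖z - T z‖
          + ENNReal.ofReal b * ENNReal.ofReal ‖z - T z‖ := by
          gcongr
          · exact hu
          · exact hv
      _ = _ := by rw [← add_mul, ← ENNReal.ofReal_add ha hb, hab]; simp
  have hmem : T z ∈ C := polarProx_gauge_le hκ hT z
  refine (norm_eq_iInf_iff_real_inner_le_zero hC hmem).1 ?_ w hw
  have : Nonempty C := ⟨⟨T z, hmem⟩⟩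
  refine le_antisymm (le_ciInf fun v => ?_)
    (ciInf_le (f := fun v : C => ‖z - v‖)
      ⟨0, by rintro _ ⟨v, rfl⟩; exact norm_nonneg _⟩ ⟨T z, hmem⟩)
  -- a strictly nearer point of `C` would be another minimizer of the objective
  by_contra! hlt
  have hv : (v : WithLp 2 (X × ℝ)) = T z := by
    refine (hT z).2 _ fun u => le_trans ?_ ((hT z).1 u)
    rw [hobj]
    exact max_le v.2 (ENNReal.ofReal_le_ofReal hlt.le)
  rw [hv] at hlt
  exact lt_irrefl _ hlt

/-- If `Fix (P_S ∘ T) ≠ ∅`, then for every `x ∈ Fix (P_S ∘ T)` and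
`y ∈ S`, `⟨T x − T y, y − T y⟩ ≤ 0`. -/
theorem inner_polarProx_fix_le_zero
    (κ : WithLp 2 (X × ℝ) → ℝ≥0∞) (hκ : IsClosedGauge κ)
    (T : WithLp 2 (X × ℝ) → WithLp 2 (X × ℝ)) (hT : IsPolarProx κ T)
    (hne : ∃ z, PS (T z) = z) :
    ∀ x : WithLp 2 (X × ℝ), PS (T x) = x →
      ∀ y : WithLp 2 (X × ℝ), sndE y = 1 →
        ⟪T x - T y, y - T y⟫ ≤ 0 := by
  intro x hx y hy
  rw [real_inner_comm]
  refine polarProx_inner_le_zero hκ hT y (T x)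
    ((polarProx_gauge_le hκ hT x).trans (ENNReal.ofReal_le_ofReal ?_))
  by_contra! hlt
  have hx1 : x.fst = (T x).fst := by
    have h : (PS (T x)).fst = (T x).fst := rfl
    rwa [hx] at h
  have hx2 : x.snd = 1 := by rw [← hx]; rfl
  have hy2 : y.snd = 1 := hy
  have hinner : ∀ w : WithLp 2 (X × ℝ),
      ⟪x - T x, w - T x⟫ = (w.snd - (T x).snd) * (1 - (T x).snd) := by
    intro w
    simp [WithLp.prod_inner_apply, hx1, hx2]
  have hnorm : ‖x - T x‖ = |1 - (T x).snd| := by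
    simp [WithLp.prod_norm_eq_of_L2, hx1, hx2, Real.sqrt_sq_eq_abs]
  have h0 := polarProx_inner_le_zero hκ hT x 0 (by simp [closedGauge_zero hκ])
  have h1 := polarProx_inner_le_zero hκ hT x (T y)
    ((polarProx_gauge_le hκ hT y).trans (ENNReal.ofReal_le_ofReal hlt.le))
  rw [hinner] at h0 h1
  have hyn : |1 - (T y).snd| ≤ ‖y - T y‖ := by
    have := WithLp.norm_snd_le (p := 2) X (y - T y)
    simpa [hy2] using this
  have hyn0 := norm_nonneg (y - T y)
  have hle : (T x).snd < 1 := by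
    have h00 : 0 ≤ (T x).snd * (1 - (T x).snd) := by simpa using h0
    have hpos : 0 < |1 - (T x).snd| := by rw [← hnorm]; linarith
    have hne1 : 1 - (T x).snd ≠ 0 := abs_pos.1 hpos
    by_contra! hge
    have : (T x).snd ≠ 1 := fun h => hne1 (by rw [h]; ring)
    have : 1 < (T x).snd := lt_of_le_of_ne hge this.symm
    nlinarith
  have hTy : (T y).snd ≤ (T x).snd := by nlinarith
  rw [hnorm, abs_of_pos (by linarith)] at hlt
  have := le_abs_self (1 - (T y).snd)
  linarith
end
end

section
/- Suppose Fix(P_S ∘ T) ≠ ∅ and let r' denote the common value of ‖T z − z‖ over z ∈ Fix(P_S ∘ T). Let γ ∈ [0,1), let x₀ = (y₀,1) ∈ S, define x_{n+1} = (1−γ)·P_S(T x_n) + γ·x_n, and let λ_{n+1} ∈ ℝ denote the second (ℝ-) coordinate of T x_n. Then λ_n → 1 − r' as n → ∞, and 1 − r' ∈ [0,1]. -/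
/-!
Write `r z = ‖z - T z‖`. Minimality of `T z` for `max {κ(u), ‖z - u‖}` means that `T z` is the
nearest-point projection of `z` onto the sublevel set `{κ ≤ r z}`, and `r z` is the optimal value.
Homogeneity of `κ` turns the projection inequality into
`r x · ⟪x - T x, T z⟫ ≤ r z · ⟪x - T x, T x⟫` and `0 ≤ ⟪z - T z, T z⟫` (`scaled_variational`,
`inner_nonneg`).

At the fixed point `x₀` the vector `x₀ - T x₀` is vertical, so the second inequality gives
`(T x₀)₂ ∈ [0,1]` and `r' = 1 - (T x₀)₂`, and the first gives `r' · λ_{n+1} ≤ r(x_n) (1 - r')`.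
Since also `|1 - λ_{n+1}| ≤ r(x_n)`, everything reduces to `r(x_n) → r'`.

On `S` the iteration is gradient descent for the convex function `r`. `descent` says that
`‖x_n - P_S T x_n‖²` is at most a multiple of `(1 + ‖x_n - x₀‖²) (r(x_n) - r(x_{n+1}))`, and
`gradient_ineq` is the convexity inequality
`r(x_n) (r(x_n) - r') ≤ ⟪x_n - P_S T x_n, x_n - x₀⟫`. So if `r(x_n)` stayed above `r' + δ`, the
quantity `(1 + ‖x_n - x₀‖²) · exp (C r(x_n))` would decrease by a fixed amount at every step
(`lyapunov`), which is impossible because it is nonnegative.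
-/


open scoped ENNReal RealInnerProductSpace Pointwise Topology
open Filter

noncomputable section

variable {X : Type*} [NormedAddCommGroup X] [InnerProductSpace ℝ X] [FiniteDimensional ℝ X]

/-! ### Polar proximal map as a projection onto sublevel sets -/

section PolarProx

variable {κ : WithLp 2 (X × ℝ) → ℝ≥0∞} {T : WithLp 2 (X × ℝ) → WithLp 2 (X × ℝ)}

omit [FiniteDimensional ℝ X] in
lemma kappa_smul_le (hκ : IsClosedGauge κ) {t c : ℝ} (ht : 0 ≤ t) {u : WithLp 2 (X × ℝ)}
    (hu : κ u ≤ ENNReal.ofReal c) : κ (t • u) ≤ ENNReal.ofReal (t * c) := by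
  rw [hκ.2.2 t ht, ENNReal.ofReal_mul ht]
  gcongr

omit [FiniteDimensional ℝ X] in
lemma kappa_zero (hκ : IsClosedGauge κ) : κ 0 = 0 := by
  simpa using hκ.2.2 0 le_rfl 0

omit [FiniteDimensional ℝ X] in
/-- The distance term dominates at the minimizer: otherwise shrinking `T z` slightly towards `0`
lowers the objective. -/
lemma kappa_prox_le (hκ : IsClosedGauge κ) (hT : IsPolarProx κ T) (z : WithLp 2 (X × ℝ)) :
    κ (T z) ≤ ENNReal.ofReal ‖z - T z‖ := by
  by_contra! hlt
  have hfin : κ (T z) ≠ ⊤ := by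
    have h := (hT z).1 0
    simp only [polarObj, kappa_zero hκ] at h
    exact ne_top_of_le_ne_top (by simp) ((le_max_left _ _).trans h)
  obtain ⟨K, hK0, hK⟩ : ∃ K : ℝ, 0 ≤ K ∧ κ (T z) = ENNReal.ofReal K :=
    ⟨(κ (T z)).toReal, ENNReal.toReal_nonneg, (ENNReal.ofReal_toReal hfin).symm⟩
  rw [hK] at hlt
  have hrK : ‖z - T z‖ < K := (ENNReal.ofReal_lt_ofReal_iff_of_nonneg (norm_nonneg _)).1 hlt
  have hr := norm_nonneg (z - T z)
  have hp := norm_nonneg (T z)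
  set ε : ℝ := (K - ‖z - T z‖) / (‖T z‖ + 1 + K) with hε
  have hden : 0 < ‖T z‖ + 1 + K := by positivity
  have hε0 : 0 < ε := div_pos (by linarith) hden
  have hε1 : ε ≤ 1 := by rw [hε, div_le_one hden]; linarith
  have hεm : ε * (‖T z‖ + 1 + K) = K - ‖z - T z‖ := div_mul_cancel₀ _ hden.ne'
  have h := (hT z).1 ((1 - ε) • T z)
  have h1 : κ ((1 - ε) • T z) ≤ ENNReal.ofReal ((1 - ε) * K) :=
    kappa_smul_le hκ (by linarith) hK.le
  have h2 : ‖z - (1 - ε) • T z‖ ≤ ‖z - T z‖ + ε * ‖T z‖ := by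
    have : z - (1 - ε) • T z = (z - T z) + ε • T z := by module
    rw [this]
    refine (norm_add_le _ _).trans ?_
    rw [norm_smul, Real.norm_of_nonneg hε0.le]
  have hKpos : 0 < K := by linarith
  have h3 : polarObj κ z ((1 - ε) • T z) < ENNReal.ofReal K := by
    refine max_lt (h1.trans_lt ?_) ?_
    · exact (ENNReal.ofReal_lt_ofReal_iff hKpos).2 (by nlinarith)
    · exact (ENNReal.ofReal_lt_ofReal_iff hKpos).2 (by nlinarith)
  have h4 : ENNReal.ofReal K ≤ polarObj κ z (T z) := hK ▸ le_max_left _ _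
  exact absurd (h4.trans h) (not_le.2 h3)

omit [FiniteDimensional ℝ X] in
lemma polarObj_prox (hκ : IsClosedGauge κ) (hT : IsPolarProx κ T) (z : WithLp 2 (X × ℝ)) :
    polarObj κ z (T z) = ENNReal.ofReal ‖z - T z‖ :=
  max_eq_right (kappa_prox_le hκ hT z)

omit [FiniteDimensional ℝ X] in
lemma residual_le (hκ : IsClosedGauge κ) (hT : IsPolarProx κ T) {z u : WithLp 2 (X × ℝ)} {c : ℝ}
    (hu : κ u ≤ ENNReal.ofReal c) (hc : ‖z - u‖ ≤ c) : ‖z - T z‖ ≤ c := by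
  have h := (hT z).1 u
  rw [polarObj_prox hκ hT] at h
  exact (ENNReal.ofReal_le_ofReal_iff ((norm_nonneg _).trans hc)).1
    (h.trans (max_le hu (ENNReal.ofReal_le_ofReal hc)))

omit [FiniteDimensional ℝ X] in
/-- `T z` is the projection of `z` onto the sublevel set `{κ ≤ ‖z - T z‖}`. -/
lemma variational (hκ : IsClosedGauge κ) (hT : IsPolarProx κ T) {z u : WithLp 2 (X × ℝ)}
    (hu : κ u ≤ ENNReal.ofReal ‖z - T z‖) : ⟪z - T z, u - T z⟫ ≤ 0 := by
  set K : Set (WithLp 2 (X × ℝ)) := {u | κ u ≤ ENNReal.ofReal ‖z - T z‖} with hK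
  have hconv : Convex ℝ K := by
    intro a ha b hb s t hs ht hst
    refine (hκ.2.1 a b s t hs ht hst).trans ?_
    calc ENNReal.ofReal s * κ a + ENNReal.ofReal t * κ b
        ≤ ENNReal.ofReal s * ENNReal.ofReal ‖z - T z‖
          + ENNReal.ofReal t * ENNReal.ofReal ‖z - T z‖ := by
          gcongr
          · exact ha
          · exact hb
      _ = ENNReal.ofReal ‖z - T z‖ := by
          rw [← add_mul, ← ENNReal.ofReal_add hs ht, hst]; simp
  have hmem : T z ∈ K := kappa_prox_le hκ hT z
  have hmin : ∀ w ∈ K, ‖z - T z‖ ≤ ‖z - w‖ := by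
    intro w hw
    by_contra! hlt
    -- such a `w` would be a second minimizer
    have hobj : polarObj κ z w ≤ polarObj κ z (T z) := by
      rw [polarObj_prox hκ hT]
      exact max_le hw (ENNReal.ofReal_le_ofReal hlt.le)
    have := (hT z).2 w fun v => hobj.trans ((hT z).1 v)
    rw [this] at hlt
    exact lt_irrefl _ hlt
  refine (norm_eq_iInf_iff_real_inner_le_zero hconv hmem).1 ?_ u hu
  have : Nonempty K := ⟨⟨_, hmem⟩⟩
  refine le_antisymm (le_ciInf fun w => hmin w w.2) ?_
  exact ciInf_le (f := fun w : K => ‖z - w‖) ⟨0, by rintro _ ⟨w, rfl⟩; positivity⟩ ⟨_, hmem⟩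

omit [FiniteDimensional ℝ X] in
lemma inner_nonneg (hκ : IsClosedGauge κ) (hT : IsPolarProx κ T) (z : WithLp 2 (X × ℝ)) :
    0 ≤ ⟪z - T z, T z⟫ := by
  have h := variational hκ hT (z := z) (u := 0) (by simp [kappa_zero hκ])
  rw [zero_sub, inner_neg_right] at h
  linarith

omit [FiniteDimensional ℝ X] in
/-- The projection inequality at `x` tested against the multiple of `T z` that lies in
`{κ ≤ ‖x - T x‖}`. -/
lemma scaled_variational (hκ : IsClosedGauge κ) (hT : IsPolarProx κ T)
    (x z : WithLp 2 (X × ℝ)) :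
    ‖x - T x‖ * ⟪x - T x, T z⟫ ≤ ‖z - T z‖ * ⟪x - T x, T x⟫ := by
  have key : ∀ t : ℝ, 0 ≤ t → t * ‖z - T z‖ ≤ ‖x - T x‖ →
      t * ⟪x - T x, T z⟫ ≤ ⟪x - T x, T x⟫ := by
    intro t ht htr
    have h := variational hκ hT (z := x) (u := t • T z)
      ((kappa_smul_le hκ ht (kappa_prox_le hκ hT z)).trans (ENNReal.ofReal_le_ofReal htr))
    rw [inner_sub_right, inner_smul_right] at h
    linarith
  have hI := inner_nonneg hκ hT x
  rcases (norm_nonneg (z - T z)).eq_or_lt with hz | hz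
  · -- `κ (T z) = 0`, so arbitrarily large multiples of `T z` are admissible
    rw [← hz, zero_mul]
    refine mul_nonpos_of_nonneg_of_nonpos (norm_nonneg _) ?_
    by_contra! hpos
    have h := key ((⟪x - T x, T x⟫ + 1) / ⟪x - T x, T z⟫) (by positivity) (by simp [← hz])
    rw [div_mul_cancel₀ _ hpos.ne'] at h
    linarith
  · have h := key (‖x - T x‖ / ‖z - T z‖) (by positivity) (div_mul_cancel₀ _ hz.ne').le
    rw [div_mul_eq_mul_div, div_le_iff₀ hz] at h
    linarith

/-! ### Coordinates in `X × ℝ` -/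

omit [FiniteDimensional ℝ X] in
lemma inner_E (z w : WithLp 2 (X × ℝ)) :
    ⟪z, w⟫ = ⟪fstE z, fstE w⟫ + sndE z * sndE w := by
  rw [WithLp.prod_inner_apply]
  simp [fstE, sndE, mul_comm]

omit [FiniteDimensional ℝ X] in
lemma norm_sq_E (z : WithLp 2 (X × ℝ)) : ‖z‖ ^ 2 = ‖fstE z‖ ^ 2 + sndE z ^ 2 := by
  rw [← real_inner_self_eq_norm_sq, inner_E, real_inner_self_eq_norm_sq]; ring

omit [NormedAddCommGroup X] [InnerProductSpace ℝ X] [FiniteDimensional ℝ X] in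
@[simp] lemma fstE_PS (z : WithLp 2 (X × ℝ)) : fstE (PS z) = fstE z := rfl

omit [NormedAddCommGroup X] [InnerProductSpace ℝ X] [FiniteDimensional ℝ X] in
@[simp] lemma sndE_PS (z : WithLp 2 (X × ℝ)) : sndE (PS z) = 1 := rfl

omit [InnerProductSpace ℝ X] [FiniteDimensional ℝ X] in
@[simp] lemma fstE_sub (z w : WithLp 2 (X × ℝ)) : fstE (z - w) = fstE z - fstE w := rfl

omit [InnerProductSpace ℝ X] [FiniteDimensional ℝ X] in
@[simp] lemma sndE_sub (z w : WithLp 2 (X × ℝ)) : sndE (z - w) = sndE z - sndE w := rfl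

omit [FiniteDimensional ℝ X] in
lemma norm_PS_sub (p : WithLp 2 (X × ℝ)) : ‖PS p - p‖ = |1 - sndE p| := by
  rw [← abs_of_nonneg (norm_nonneg (PS p - p)), ← sq_eq_sq_iff_abs_eq_abs, norm_sq_E]
  simp

omit [FiniteDimensional ℝ X] in
lemma pythagoras {x : WithLp 2 (X × ℝ)} (hx : sndE x = 1) (p : WithLp 2 (X × ℝ)) :
    ‖x - p‖ ^ 2 = ‖x - PS p‖ ^ 2 + (1 - sndE p) ^ 2 := by
  rw [norm_sq_E, norm_sq_E (x - PS p)]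
  simp [hx]

omit [FiniteDimensional ℝ X] in
lemma abs_one_sub_le {x : WithLp 2 (X × ℝ)} (hx : sndE x = 1) (p : WithLp 2 (X × ℝ)) :
    |1 - sndE p| ≤ ‖x - p‖ := by
  refine abs_le_of_sq_le_sq ?_ (norm_nonneg _)
  have := pythagoras hx p
  nlinarith [sq_nonneg ‖x - PS p‖]

/-! ### One step of the iteration -/

omit [FiniteDimensional ℝ X] in
/-- Sufficient decrease of the residual along one under-relaxed step. The comparison point is
`(1 - (1 - γ) ε) • T x` with the largest `ε` for which `‖P_S (T x) - (1 - ε) • T x‖` is known to be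
at most `(1 - ε) ‖x - T x‖`. -/
lemma descent (hκ : IsClosedGauge κ) (hT : IsPolarProx κ T) {x x' : WithLp 2 (X × ℝ)}
    (hx : sndE x = 1) (hr : 0 < ‖x - T x‖) {γ : ℝ} (hγ0 : 0 ≤ γ) (hγ1 : γ < 1)
    (hx' : x' = (1 - γ) • PS (T x) + γ • x) :
    (1 - γ) * ‖x - PS (T x)‖ ^ 2
      ≤ 2 * (‖x - T x‖ + ‖T x‖) * (‖x - T x‖ - ‖x' - T x'‖) := by
  set r := ‖x - T x‖ with hrdef
  set p := T x with hp
  have hpn := norm_nonneg p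
  have ha : |1 - sndE p| ≤ r := abs_one_sub_le hx p
  have ha0 := abs_nonneg (1 - sndE p)
  have hpy : r ^ 2 = ‖x - PS p‖ ^ 2 + |1 - sndE p| ^ 2 := by
    rw [sq_abs]; exact pythagoras hx p
  have hden : 0 < r + ‖p‖ := by positivity
  set ε : ℝ := (r - |1 - sndE p|) / (r + ‖p‖) with hε
  have hε0 : 0 ≤ ε := div_nonneg (by linarith) hden.le
  have hε1 : ε ≤ 1 := by rw [hε, div_le_one hden]; linarith
  have hεm : ε * (r + ‖p‖) = r - |1 - sndE p| := div_mul_cancel₀ _ hden.ne'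
  have hs0 : 0 ≤ 1 - (1 - γ) * ε := by nlinarith
  have h1 : ‖PS p - (1 - ε) • p‖ ≤ (1 - ε) * r := by
    have : PS p - (1 - ε) • p = (PS p - p) + ε • p := by module
    rw [this]
    refine (norm_add_le _ _).trans ?_
    rw [norm_smul, Real.norm_of_nonneg hε0, norm_PS_sub]
    linarith
  have h2 : ‖x' - (1 - (1 - γ) * ε) • p‖ ≤ (1 - (1 - γ) * ε) * r := by
    have : x' - (1 - (1 - γ) * ε) • p = (1 - γ) • (PS p - (1 - ε) • p) + γ • (x - p) := by
      rw [hx']; module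
    rw [this]
    refine (norm_add_le _ _).trans ?_
    rw [norm_smul, norm_smul, Real.norm_of_nonneg hγ0, Real.norm_of_nonneg (by linarith)]
    have := mul_le_mul_of_nonneg_left h1 (by linarith : 0 ≤ 1 - γ)
    linarith
  have h3 : ‖x' - T x'‖ ≤ (1 - (1 - γ) * ε) * r :=
    residual_le hκ hT (kappa_smul_le hκ hs0 (kappa_prox_le hκ hT x)) h2
  calc (1 - γ) * ‖x - PS p‖ ^ 2
      ≤ (1 - γ) * (2 * r * (r - |1 - sndE p|)) := by
        refine mul_le_mul_of_nonneg_left ?_ (by linarith)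
        nlinarith
    _ = 2 * (r + ‖p‖) * ((1 - γ) * ε * r) := by rw [← hεm]; ring
    _ ≤ _ := by
        refine mul_le_mul_of_nonneg_left ?_ (by positivity)
        linarith

omit [FiniteDimensional ℝ X] in
/-- The convexity inequality for the residual on `S`, whose gradient at `x` is a positive multiple
of `x - P_S (T x)`. -/
lemma gradient_ineq (hκ : IsClosedGauge κ) (hT : IsPolarProx κ T) {x z : WithLp 2 (X × ℝ)}
    (hx : sndE x = 1) (hz : sndE z = 1) (hr : 0 < ‖x - T x‖) (hrz : ‖z - T z‖ ≤ ‖x - T x‖) :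
    ‖x - T x‖ * (‖x - T x‖ - ‖z - T z‖) ≤ ⟪x - PS (T x), x - z⟫ := by
  have hPS : ⟪x - PS (T x), x - z⟫ = ⟪x - T x, x - z⟫ := by
    rw [inner_E, inner_E (x - T x)]; simp [hx, hz]
  have hsv := scaled_variational hκ hT x z
  have hI := inner_nonneg hκ hT x
  have hcs := real_inner_le_norm (x - T x) (z - T z)
  have hself := real_inner_self_eq_norm_sq (x - T x)
  have hsplit : ⟪x - T x, x - z⟫ = ⟪x - T x, x - T x⟫ + ⟪x - T x, T x⟫
      - ⟪x - T x, z - T z⟫ - ⟪x - T x, T z⟫ := by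
    rw [← inner_add_right, ← inner_sub_right, ← inner_sub_right]; congr 1; abel
  rw [hPS, hsplit, hself]
  have : ⟪x - T x, T z⟫ ≤ ⟪x - T x, T x⟫ := by
    refine le_of_mul_le_mul_left (hsv.trans ?_) hr
    exact mul_le_mul_of_nonneg_right hrz hI
  nlinarith

end PolarProx

/-! ### Convergence -/

/-- A discrete Gronwall argument: `A n * exp (C * r n)` would drop by at least `c` at every step. -/
lemma lyapunov {A r : ℕ → ℝ} {C c : ℝ} (hA : ∀ n, 0 ≤ A n) (hr : ∀ n, 0 ≤ r n) (hC : 0 ≤ C)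
    (hc : 0 < c) (h : ∀ n, A (n + 1) ≤ A n + C * A n * (r n - r (n + 1)) - c) : False := by
  have hstep : ∀ n, A (n + 1) * Real.exp (C * r (n + 1)) ≤ A n * Real.exp (C * r n) - c := by
    intro n
    have he : 1 ≤ Real.exp (C * r (n + 1)) := Real.one_le_exp (mul_nonneg hC (hr _))
    have he2 : 1 + C * (r n - r (n + 1)) ≤ Real.exp (C * (r n - r (n + 1))) := by
      linarith [Real.add_one_le_exp (C * (r n - r (n + 1)))]
    calc A (n + 1) * Real.exp (C * r (n + 1))
        ≤ (A n * (1 + C * (r n - r (n + 1))) - c) * Real.exp (C * r (n + 1)) := by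
          refine mul_le_mul_of_nonneg_right ?_ (by linarith)
          linarith [h n]
      _ = A n * ((1 + C * (r n - r (n + 1))) * Real.exp (C * r (n + 1)))
          - c * Real.exp (C * r (n + 1)) := by ring
      _ ≤ A n * Real.exp (C * r n) - c := by
          refine sub_le_sub (mul_le_mul_of_nonneg_left ?_ (hA n)) (by nlinarith)
          calc _ ≤ Real.exp (C * (r n - r (n + 1))) * Real.exp (C * r (n + 1)) := by gcongr
            _ = Real.exp (C * r n) := by rw [← Real.exp_add]; ring_nf
  have hsum : ∀ n : ℕ, A n * Real.exp (C * r n) ≤ A 0 * Real.exp (C * r 0) - n * c := by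
    intro n
    induction n with
    | zero => simp
    | succ k ih => push_cast; linarith [hstep k]
  obtain ⟨n, hn⟩ := exists_nat_gt (A 0 * Real.exp (C * r 0) / c)
  rw [div_lt_iff₀ hc] at hn
  have := hsum n
  have := mul_nonneg (hA n) (Real.exp_pos (C * r n)).le
  linarith

/-- If `Fix (P_S ∘ T) ≠ ∅` with common displacement value `r'`,
`γ ∈ [0,1)` and `x₀ = (y₀,1) ∈ S`, the shadow second coordinates
`λ_{n+1} = (T x_n)₂` of the under-relaxed iteration satisfy `λ_n → 1 − r' ∈ [0,1]`. -/
theorem GP4A_shadow_snd_tendsto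
    (κ : WithLp 2 (X × ℝ) → ℝ≥0∞) (hκ : IsClosedGauge κ)
    (T : WithLp 2 (X × ℝ) → WithLp 2 (X × ℝ)) (hT : IsPolarProx κ T)
    (x₀ : WithLp 2 (X × ℝ)) (hx₀ : PS (T x₀) = x₀)
    (r' : ℝ) (hr' : r' = ‖T x₀ - x₀‖)
    (γ : ℝ) (hγ0 : 0 ≤ γ) (hγ1 : γ < 1)
    (x : ℕ → WithLp 2 (X × ℝ)) (hx0 : sndE (x 0) = 1)
    (hrec : ∀ n, x (n + 1) = (1 - γ) • PS (T (x n)) + γ • x n)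
    (lam : ℕ → ℝ) (hlam : ∀ n, lam (n + 1) = sndE (T (x n))) :
    Tendsto lam atTop (𝓝 (1 - r')) ∧ 0 ≤ 1 - r' ∧ 1 - r' ≤ 1 := by
  have hs0 : sndE x₀ = 1 := by rw [← hx₀]; exact sndE_PS _
  have hf0 : fstE (T x₀) = fstE x₀ := by rw [← fstE_PS (T x₀), hx₀]
  -- `x₀ - T x₀` is vertical
  have hvert : ∀ u, ⟪x₀ - T x₀, u⟫ = (1 - sndE (T x₀)) * sndE u := by
    intro u; rw [inner_E]; simp [hf0, hs0]
  rw [norm_sub_rev] at hr'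
  have hrabs : r' = |1 - sndE (T x₀)| := by rw [hr', ← norm_PS_sub (T x₀), hx₀]
  have hs : 0 ≤ (1 - sndE (T x₀)) * sndE (T x₀) := by
    rw [← hvert]; exact inner_nonneg hκ hT x₀
  have hs_nonneg : 0 ≤ sndE (T x₀) := by
    by_contra! hneg; nlinarith
  have hs_le : sndE (T x₀) ≤ 1 := by
    by_contra! hgt; nlinarith
  have hrs : r' = 1 - sndE (T x₀) := by rw [hrabs, abs_of_nonneg (by linarith)]
  have hr'0 : 0 ≤ r' := by rw [hrabs]; positivity
  refine ⟨?_, by linarith, by linarith⟩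
  have hx1 : ∀ n, sndE (x n) = 1 := by
    intro n
    induction n with
    | zero => exact hx0
    | succ k ih =>
      have : sndE (x (k + 1)) = (1 - γ) * sndE (PS (T (x k))) + γ * sndE (x k) := by
        rw [hrec]; rfl
      rw [this, ih, sndE_PS]; ring
  set r : ℕ → ℝ := fun n => ‖x n - T (x n)‖ with hrdef
  have hr0 : ∀ n, 0 ≤ r n := fun n => norm_nonneg _
  have hlow : ∀ n, |1 - lam (n + 1)| ≤ r n := fun n => by
    rw [hlam]; exact abs_one_sub_le (hx1 n) _
  -- the fixed point's projection inequality bounds the height of every sublevel set of `κ`;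
  -- the common factor `r'` cancels when `r' > 0`
  have hup : ∀ n, r' * (r' * lam (n + 1)) ≤ r' * (r n * (1 - r')) := by
    intro n
    have h := scaled_variational hκ hT x₀ (x n)
    rw [hvert, hvert, ← hr', ← hrs, ← hlam] at h
    have : sndE (T x₀) = 1 - r' := by linarith
    rw [this] at h
    linarith
  have hmin : ∀ n, r' ≤ r n := by
    intro n
    rcases hr'0.eq_or_lt with h | h
    · rw [← h]; exact hr0 n
    · have h1 := le_of_mul_le_mul_left (hup n) h
      have h2 := (abs_le.1 (hlow n)).2
      nlinarith
  have hanti : Antitone r := by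
    refine antitone_nat_of_succ_le fun n => ?_
    refine residual_le hκ hT (kappa_prox_le hκ hT (x n)) ?_
    have heq : x (n + 1) - T (x n)
        = (1 - γ) • (PS (T (x n)) - T (x n)) + γ • (x n - T (x n)) := by
      rw [hrec]; module
    have hn := abs_one_sub_le (hx1 n) (T (x n))
    rw [heq]
    refine (norm_add_le _ _).trans ?_
    rw [norm_smul, norm_smul, Real.norm_of_nonneg hγ0, Real.norm_of_nonneg (by linarith),
      norm_PS_sub]
    have := mul_le_mul_of_nonneg_left hn (by linarith : 0 ≤ 1 - γ)
    linarith
  have hlim : Tendsto r atTop (𝓝 r') := by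
    refine tendsto_order.2 ⟨fun a ha => Eventually.of_forall fun n => ha.trans_le (hmin n),
      fun b hb => ?_⟩
    suffices ∃ n, r n < b by
      obtain ⟨n, hn⟩ := this
      filter_upwards [eventually_ge_atTop n] with m hm
      exact (hanti hm).trans_lt hn
    by_contra! hge
    have hb0 : 0 < b := hr'0.trans_lt hb
    have hγ : 0 < 1 - γ := by linarith
    have hx0n := norm_nonneg x₀
    -- while `r n ≥ b > r'`, expanding `‖x (n + 1) - x₀‖²` yields a fixed gain from `gradient_ineq`
    -- against an error controlled by `descent`
    refine lyapunov (A := fun n => 1 + ‖x n - x₀‖ ^ 2) (r := r)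
      (C := 2 * (2 * r 0 + ‖x₀‖ + 1)) (c := 2 * (1 - γ) * (b * (b - r')))
      (fun n => by positivity) hr0 (by have := hr0 0; positivity)
      (mul_pos (by linarith) (mul_pos hb0 (by linarith))) fun n => ?_
    have hrn : 0 < r n := hb0.trans_le (hge n)
    have hdec := descent hκ hT (hx1 n) hrn hγ0 hγ1 (hrec n)
    have hgrad := gradient_ineq hκ hT (hx1 n) hs0 hrn (by rw [← hr']; exact hmin n)
    rw [← hr'] at hgrad
    change (1 - γ) * _ ≤ 2 * (r n + _) * (r n - r (n + 1)) at hdec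
    change r n * (r n - r') ≤ _ at hgrad
    have hgap : b * (b - r') ≤ r n * (r n - r') :=
      mul_le_mul (hge n) (by linarith [hge n]) (by linarith) hrn.le
    have hexp : ‖x (n + 1) - x₀‖ ^ 2 = ‖x n - x₀‖ ^ 2
        - 2 * (1 - γ) * ⟪x n - PS (T (x n)), x n - x₀⟫
        + (1 - γ) * ((1 - γ) * ‖x n - PS (T (x n))‖ ^ 2) := by
      have heq : x (n + 1) - x₀ = (x n - x₀) - (1 - γ) • (x n - PS (T (x n))) := by
        rw [hrec]; module
      rw [heq, norm_sub_sq_real, inner_smul_right, norm_smul, Real.norm_of_nonneg hγ.le,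
        real_inner_comm]
      ring
    have hD := norm_nonneg (x n - x₀)
    have hΔ : 0 ≤ r n - r (n + 1) := sub_nonneg.2 (hanti n.le_succ)
    have hTn : ‖T (x n)‖ ≤ r n + ‖x n - x₀‖ + ‖x₀‖ := by
      have heq : T (x n) = (x n - x₀) + x₀ - (x n - T (x n)) := by abel
      have h1 := norm_sub_le ((x n - x₀) + x₀) (x n - T (x n))
      have h2 := norm_add_le (x n - x₀) x₀
      rw [← heq] at h1
      change _ ≤ _ + r n at h1
      linarith
    have hrn0 : r n ≤ r 0 := hanti n.zero_le
    have hsize : r n + ‖T (x n)‖ ≤ (2 * r 0 + ‖x₀‖ + 1) * (1 + ‖x n - x₀‖ ^ 2) := by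
      have : 0 ≤ (2 * r 0 + ‖x₀‖) * ‖x n - x₀‖ ^ 2 := by
        have := hr0 0
        positivity
      nlinarith [sq_nonneg (‖x n - x₀‖ - 1)]
    have h1 : (1 - γ) * ((1 - γ) * ‖x n - PS (T (x n))‖ ^ 2)
        ≤ 2 * (2 * r 0 + ‖x₀‖ + 1) * (1 + ‖x n - x₀‖ ^ 2) * (r n - r (n + 1)) := by
      have h2 := mul_le_mul_of_nonneg_right hsize hΔ
      have h3 : 0 ≤ (1 - γ) * ‖x n - PS (T (x n))‖ ^ 2 := by positivity
      nlinarith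
    have h4 : (1 - γ) * (b * (b - r')) ≤ (1 - γ) * ⟪x n - PS (T (x n)), x n - x₀⟫ :=
      mul_le_mul_of_nonneg_left (hgap.trans hgrad) hγ.le
    change 1 + ‖x (n + 1) - x₀‖ ^ 2 ≤ _
    rw [hexp]
    linarith
  rw [← tendsto_add_atTop_iff_nat 1]
  have hlower : Tendsto (fun n => 1 - r n) atTop (𝓝 (1 - r')) := hlim.const_sub 1
  have hlow' : ∀ n, 1 - r n ≤ lam (n + 1) := fun n => by
    linarith [(abs_le.1 (hlow n)).2]
  -- squeeze; the upper bound from `hup` is vacuous when `r' = 0`, but then `r n → 0`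
  rcases hr'0.eq_or_lt with h | h
  · refine tendsto_of_tendsto_of_tendsto_of_le_of_le hlower (h := fun n => 1 + r n) ?_ hlow'
      fun n => ?_
    · have := hlim.const_add 1
      rw [← h, add_zero] at this
      rwa [← h, sub_zero]
    · change _ ≤ 1 + r n
      linarith [(abs_le.1 (hlow n)).1]
  · refine tendsto_of_tendsto_of_tendsto_of_le_of_le hlower
      (h := fun n => r n * (1 - r') / r') ?_ hlow' fun n => ?_
    · have := (hlim.mul_const (1 - r')).div_const r'
      rwa [mul_div_cancel_left₀ _ h.ne'] at this
    · change _ ≤ r n * (1 - r') / r'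
      rw [le_div_iff₀ h]
      linarith [le_of_mul_le_mul_left (hup n) h]
end
end
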